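/- For all integers r,q ≥ 1 and every tag L ∈ {A,B} and indices 0 ≤ j ≤ r, 0 ≤ k ≤ q with (L,j,k) ≠ (A,0,0): σ_{rq} maps the axis position of the label L^j_k to the meander position of L^j_k. That is, the two labelings of the vertices — by axis positions and by meander positions — are consistent under σ_{rq}. -/

import Mathlib

/-- Morse numbers `i_j` of a permutation `σ` of `{1,…,N}` (extended to `ℕ`),
via the recursion `i_1 = 0`,
`i_{j+1} = i_j + (-1)^(j+1) * sign (σ⁻¹(j+1) - σ⁻¹(j))`. -/
def morse (σ : Equiv.Perm ℕ) : ℕ → ℤ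
  | 0 => 0
  | 1 => 0
  | (j+2) => morse σ (j+1) +
      (-1)^(j+2) * Int.sign ((σ.symm (j+2) : ℤ) - (σ.symm (j+1) : ℤ))

/-- Zero numbers `z_{j k}`, recursion in the first index `j`, second index `k` fixed:
`z_{1k} = 0`, `z_{kk} = i_k`, `z_{k+1,k} = min (i_k, i_{k+1})`, and otherwise
`z_{j+1,k} = z_{jk} + ((-1)^(j+1)/2) * (sign (σ⁻¹(j+1) - σ⁻¹(k)) - sign (σ⁻¹(j) - σ⁻¹(k)))`. -/
def zrec (σ : Equiv.Perm ℕ) (k : ℕ) : ℕ → ℤ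
  | 0 => 0
  | 1 => 0
  | (j+2) =>
      if j+2 = k then morse σ k
      else if j+1 = k then min (morse σ k) (morse σ (k+1))
      else zrec σ k (j+1) +
        ((-1)^(j+2) * (Int.sign ((σ.symm (j+2) : ℤ) - (σ.symm k : ℤ))
          - Int.sign ((σ.symm (j+1) : ℤ) - (σ.symm k : ℤ)))) / 2

/-- The zero number `z_{m n}`. -/
def zfun (σ : Equiv.Perm ℕ) (m n : ℕ) : ℤ := zrec σ n m

/-- The connection digraph of a dissipative Morse permutation `σ` of `{1,…,N}`:
an edge `m ⤳ n` iff `i_m = i_n + 1` and no `w` strictly between `m` and `n`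
blocks, i.e. satisfies `z_{mw} = z_{wn} = z_{mn}`. -/
def hasEdge (N : ℕ) (σ : Equiv.Perm ℕ) (m n : ℕ) : Prop :=
  1 ≤ m ∧ m ≤ N ∧ 1 ≤ n ∧ n ≤ N ∧
  morse σ m = morse σ n + 1 ∧
  ¬ ∃ w : ℕ, min m n < w ∧ w < max m n ∧
      zfun σ m w = zfun σ w n ∧ zfun σ w n = zfun σ m n

/-- A dissipative permutation of `{1,…,N}`. -/
def Dissipative (N : ℕ) (σ : Equiv.Perm ℕ) : Prop :=
  Set.BijOn σ (Set.Icc 1 N) (Set.Icc 1 N) ∧ σ 1 = 1 ∧ σ N = N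

/-- The Morse property: all Morse numbers are nonnegative. -/
def MorseProp (N : ℕ) (σ : Equiv.Perm ℕ) : Prop :=
  ∀ j, 1 ≤ j → j ≤ N → 0 ≤ morse σ j

/-- Morse counts `μ(i) = #{j ∈ {1,…,N} : i_j = i}`. -/
def morseCount (N : ℕ) (σ : Equiv.Perm ℕ) (i : ℤ) : ℕ :=
  ((Finset.Icc 1 N).filter (fun j => morse σ j = i)).card

/-- The primitive 3-nose permutation `σ_{rq}` of `{1,…,N}`, `N = 2(r+1)(q+1)-1`,
characterized by its defining relations, extended to a permutation of `ℕ`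
fixing everything outside `{1,…,N}`. -/
def SigmaRQ (r q : ℕ) (σ : Equiv.Perm ℕ) : Prop :=
  (∀ a, a ∉ Set.Icc 1 (2*(r+1)*(q+1) - 1) → σ a = a) ∧
  (∀ j k, j ≤ r → k ≤ q →
    σ (2*((q+1)*j+k)+1) = 2*(j+(r+1)*k)+1) ∧
  (∀ j k, j ≤ r → k ≤ q → ¬(j = 0 ∧ k = 0) →
    σ (2*((q+1)*(r-j)+(q-k)+1)) = 2*(j+(r+1)*k))

/-- Tags `A`, `B` of equilibrium labels `A^j_k`, `B^j_k`. -/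
inductive Tag | A | B
deriving DecidableEq

/-- The axis position (`h_1`-position) of the label `L^j_k` for parameters `(r,q)`. -/
def axisPos (r q : ℕ) : Tag → ℕ → ℕ → ℕ
  | Tag.A, j, k => if Odd j then (q+1)*(j-1)+k+1 else (q+1)*(2*r+1-j)+(q-k)+1
  | Tag.B, j, k => if Odd j then (q+1)*j+(q-k)+1 else (q+1)*(2*r-j)+k+1

/-- The meander position (`h_0`-position) of the label `L^j_k` for parameters `(r,q)`. -/
def meanderPos (r q : ℕ) : Tag → ℕ → ℕ → ℕ
  | Tag.A, j, k => if Odd k then (r+1)*(2*q+1-k)+(2*r+1-j) else (r+1)*k+j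
  | Tag.B, j, k => if Odd k then (r+1)*(2*q+1-k)+j else (r+1)*(k+1)+(r-j)

/-- The suspension `σ̃` of a dissipative permutation `σ` of `{1,…,N}`:
`σ̃(1) = 1`, `σ̃(N+2) = N+2`, and `σ̃(a+1) = N+2 - σ(a)` for `1 ≤ a ≤ N`. -/
def IsSuspension (N : ℕ) (σ σt : Equiv.Perm ℕ) : Prop :=
  σt 1 = 1 ∧ σt (N+2) = N+2 ∧ ∀ a, 1 ≤ a → a ≤ N → σt (a+1) = N+2 - σ a

/-- The label `A^0_0` is the distinguished (formal) vertex `⋆`. -/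
def IsStar (L : Tag) (j k : ℕ) : Prop := L = Tag.A ∧ j = 0 ∧ k = 0

/-- Tag swap `A ↔ B`, used by the reversor. -/
def tagSwap : Tag → Tag
  | Tag.A => Tag.B
  | Tag.B => Tag.A

/-- consistency of the two labelings: `σ_{rq}` maps the axis
position of each label `L^j_k ≠ A^0_0` to its meander position. -/
theorem stmt_6 (r q : ℕ) (hr : 1 ≤ r) (hq : 1 ≤ q)
    (σ : Equiv.Perm ℕ) (hσ : SigmaRQ r q σ) :
    ∀ (L : Tag) (j k : ℕ), j ≤ r → k ≤ q → ¬(L = Tag.A ∧ j = 0 ∧ k = 0) →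
      σ (axisPos r q L j k) = meanderPos r q L j k := by
  obtain ⟨-, hO, hE⟩ := hσ
  have odd_case : ∀ j k x y : ℕ, j ≤ r → k ≤ q → x = 2*((q+1)*j+k)+1 →
      y = 2*(j+(r+1)*k)+1 → σ x = y := by
    intro j k x y hj hk hx hy
    rw [hx, hy]
    exact hO j k hj hk
  -- the even relation, with `u = r - j` and `v = q - k`
  have even_case : ∀ j k u v x y : ℕ, j + u = r → k + v = q → ¬(j = 0 ∧ k = 0) →
      x = 2*((q+1)*u+v+1) → y = 2*(j+(r+1)*k) → σ x = y := by
    intro j k u v x y hj hk h0 hx hy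
    have h := hE j k (by omega) (by omega) h0
    rw [show r - j = u by omega, show q - k = v by omega] at h
    rw [hx, hy]
    exact h
  clear hO hE
  intro L j k hj hk hL
  rcases Nat.even_or_odd' j with ⟨a, rfl | rfl⟩ <;>
  rcases Nat.even_or_odd' k with ⟨b, rfl | rfl⟩ <;>
  obtain ⟨c, rfl⟩ := Nat.exists_eq_add_of_le hj <;>
  obtain ⟨d, rfl⟩ := Nat.exists_eq_add_of_le hk <;>
  cases L <;>
  simp only [axisPos, meanderPos, Nat.not_odd_iff_even.2 (even_two_mul _),
    odd_two_mul_add_one, if_true, if_false, Nat.add_sub_cancel_left, Nat.add_sub_cancel]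
  · rw [show 2*(2*a+c)+1-2*a = 2*a+2*c+1 by omega]
    exact even_case (a) (b) (a+c) (b+d) _ _ (by omega) (by omega) (by rintro ⟨h1, h2⟩; exact hL ⟨rfl, by omega, by omega⟩) (by ring) (by ring)
  · rw [show 2*(2*a+c)-2*a = 2*a+2*c by omega]
    exact odd_case (a+c) (b) _ _ (by omega) (by omega) (by ring) (by ring)
  · rw [show 2*(2*a+c)+1-2*a = 2*a+2*c+1 by omega, show 2*(2*b+1+d)+1-(2*b+1) = 2*b+2*d+2 by omega]
    exact odd_case (a+c) (b+1+d) _ _ (by omega) (by omega) (by ring) (by ring)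
  · rw [show 2*(2*a+c)-2*a = 2*a+2*c by omega, show 2*(2*b+1+d)+1-(2*b+1) = 2*b+2*d+2 by omega]
    exact even_case (a) (b+1+d) (a+c) (b) _ _ (by omega) (by omega) (by omega) (by ring) (by ring)
  · exact odd_case (a) (b) _ _ (by omega) (by omega) (by ring) (by ring)
  · exact even_case (a+1+c) (b) (a) (b+d) _ _ (by omega) (by omega) (by omega) (by ring) (by ring)
  · rw [show 2*(2*b+1+d)+1-(2*b+1) = 2*b+2*d+2 by omega, show 2*(2*a+1+c)+1-(2*a+1) = 2*a+2*c+2 by omega]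
    exact even_case (a+1+c) (b+1+d) (a) (b) _ _ (by omega) (by omega) (by omega) (by ring) (by ring)
  · rw [show 2*(2*b+1+d)+1-(2*b+1) = 2*b+2*d+2 by omega]
    exact odd_case (a) (b+1+d) _ _ (by omega) (by omega) (by ring) (by ring)
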